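/- Define the ℂ-linear functional μ on Q by μ(E^m F^n K^l) = (β²/i)·δ_{m,1}·δ_{n,1}·δ_{l,3} on the PBW basis {E^m F^n K^l : m,n ∈ {0,1}, 0 ≤ l ≤ 3}, and the element c = (β²/i)·E·F·(1 + K + K² + K³) ∈ Q. Then: (i) μ is a right integral: (μ⊗id)(Δ(x)) = μ(x)·1 for all x ∈ Q; (ii) c is a two-sided cointegral: x·c = c·x = ε(x)·c for all x ∈ Q; (iii) the normalisations (μ⊗μ)(M) = 1 and μ(c) = 1 hold, where M = R₂₁·R is the monodromy matrix. -/

import Mathlib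

open TensorProduct

set_option maxHeartbeats 1000000
set_option synthInstance.maxHeartbeats 400000

noncomputable section

/-- Generators of the restricted quantum group `Q = \bar U_i sl(2)`. -/
inductive QGen : Type
  | E | F | K | Kinv
deriving DecidableEq

/-- The free algebra on the generators. -/
abbrev FA : Type := FreeAlgebra ℂ QGen

def ιE : FA := FreeAlgebra.ι ℂ QGen.E
def ιF : FA := FreeAlgebra.ι ℂ QGen.F
def ιK : FA := FreeAlgebra.ι ℂ QGen.K
def ιKi : FA := FreeAlgebra.ι ℂ QGen.Kinv

/-- Defining relations of `\bar U_i sl(2)` (at `q = i`, i.e. `p = 2`). -/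
inductive QRel : FA → FA → Prop
  | KKi : QRel (ιK * ιKi) 1
  | KiK : QRel (ιKi * ιK) 1
  | KEKi : QRel (ιK * ιE * ιKi) (-ιE)
  | KFKi : QRel (ιK * ιF * ιKi) (-ιF)
  | EF : QRel (ιE * ιF - ιF * ιE) ((2 * Complex.I)⁻¹ • (ιK - ιKi))
  | Esq : QRel (ιE ^ 2) 0
  | Fsq : QRel (ιF ^ 2) 0
  | K4 : QRel (ιK ^ 4) 1

/-- The restricted quantum group `\bar U_i sl(2)`: the quotient of the free algebra
by the two-sided ideal generated by the defining relations. -/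
abbrev Q : Type := RingQuot QRel

def gE : Q := RingQuot.mkAlgHom ℂ QRel ιE
def gF : Q := RingQuot.mkAlgHom ℂ QRel ιF
def gK : Q := RingQuot.mkAlgHom ℂ QRel ιK
def gKi : Q := RingQuot.mkAlgHom ℂ QRel ιKi

section Gadgets

variable (k : Type) [Field k] (A : Type) [Ring A] [Algebra k A]

abbrev TP2 : Type := A ⊗[k] A
abbrev TP3 : Type := A ⊗[k] (A ⊗[k] A)
abbrev TP4 : Type := A ⊗[k] (A ⊗[k] (A ⊗[k] A))

/-- Multiplication `a ⊗ b ↦ a * b`. -/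
def mulA : TP2 k A →ₗ[k] A := LinearMap.mul' k A

/-- Tensor flip `a ⊗ b ↦ b ⊗ a`. -/
def flipA : TP2 k A →ₗ[k] TP2 k A := (TensorProduct.comm k A A).toLinearMap

/-- `a ↦ a ⊗ 1`. -/
def lTen : A →ₗ[k] TP2 k A := (TensorProduct.mk k A A).flip 1

/-- `a ↦ 1 ⊗ a`. -/
def rTen : A →ₗ[k] TP2 k A := TensorProduct.mk k A A 1

/-- `a ⊗ b ↦ a ⊗ b ⊗ 1`. -/
def emb12 : TP2 k A →ₗ[k] TP3 k A := TensorProduct.map LinearMap.id (lTen k A)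

/-- `a ⊗ b ↦ a ⊗ 1 ⊗ b`. -/
def emb13 : TP2 k A →ₗ[k] TP3 k A := TensorProduct.map LinearMap.id (rTen k A)

/-- `a ⊗ b ↦ 1 ⊗ a ⊗ b`. -/
def emb23 : TP2 k A →ₗ[k] TP3 k A := TensorProduct.mk k A (TP2 k A) 1

/-- `a ⊗ b ⊗ c ↦ a ⊗ c ⊗ b`. -/
def perm132 : TP3 k A →ₗ[k] TP3 k A := TensorProduct.map LinearMap.id (flipA k A)

/-- `a ⊗ b ⊗ c ↦ b ⊗ c ⊗ a`. -/
def perm231 : TP3 k A →ₗ[k] TP3 k A :=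
  (TensorProduct.assoc k A A A).toLinearMap ∘ₗ (TensorProduct.comm k A (TP2 k A)).toLinearMap

/-- `a ⊗ b ⊗ c ↦ c ⊗ a ⊗ b`. -/
def perm312 : TP3 k A →ₗ[k] TP3 k A :=
  (TensorProduct.comm k (TP2 k A) A).toLinearMap ∘ₗ (TensorProduct.assoc k A A A).symm.toLinearMap

/-- `a ⊗ b ⊗ c ↦ b ⊗ a ⊗ c`. -/
def perm213 : TP3 k A →ₗ[k] TP3 k A :=
  (TensorProduct.assoc k A A A).toLinearMap ∘ₗ
    (TensorProduct.map (flipA k A) LinearMap.id) ∘ₗ (TensorProduct.assoc k A A A).symm.toLinearMap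

variable {k A}

/-- `(Δ ⊗ id)` on two tensor factors, landing in the triple tensor product. -/
def copL (D : A →ₐ[k] TP2 k A) : TP2 k A →ₗ[k] TP3 k A :=
  (TensorProduct.assoc k A A A).toLinearMap ∘ₗ TensorProduct.map D.toLinearMap LinearMap.id

/-- `(id ⊗ Δ)` on two tensor factors. -/
def copR (D : A →ₐ[k] TP2 k A) : TP2 k A →ₗ[k] TP3 k A :=
  TensorProduct.map LinearMap.id D.toLinearMap

/-- `(ε ⊗ id) : A ⊗ A → A`. -/
def cuL (ce : A →ₐ[k] k) : TP2 k A →ₗ[k] A :=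
  (TensorProduct.lid k A).toLinearMap ∘ₗ TensorProduct.map ce.toLinearMap LinearMap.id

/-- `(id ⊗ ε) : A ⊗ A → A`. -/
def cuR (ce : A →ₐ[k] k) : TP2 k A →ₗ[k] A :=
  (TensorProduct.rid k A).toLinearMap ∘ₗ TensorProduct.map LinearMap.id ce.toLinearMap

/-- `(id ⊗ ε ⊗ id) : A ⊗ A ⊗ A → A ⊗ A`. -/
def cuMid (ce : A →ₐ[k] k) : TP3 k A →ₗ[k] TP2 k A :=
  TensorProduct.map LinearMap.id (cuL ce)

/-- `(Δ ⊗ id ⊗ id)`. -/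
def cop4_1 (D : A →ₐ[k] TP2 k A) : TP3 k A →ₗ[k] TP4 k A :=
  (TensorProduct.assoc k A A (TP2 k A)).toLinearMap ∘ₗ TensorProduct.map D.toLinearMap LinearMap.id

/-- `(id ⊗ Δ ⊗ id)`. -/
def cop4_2 (D : A →ₐ[k] TP2 k A) : TP3 k A →ₗ[k] TP4 k A :=
  TensorProduct.map LinearMap.id (copL D)

/-- `(id ⊗ id ⊗ Δ)`. -/
def cop4_3 (D : A →ₐ[k] TP2 k A) : TP3 k A →ₗ[k] TP4 k A :=
  TensorProduct.map LinearMap.id (copR D)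

/-- `a ⊗ b ⊗ c ↦ a ⊗ b ⊗ c ⊗ 1`, i.e. `Φ ↦ Φ ⊗ 1`. -/
def pad4 : TP3 k A →ₗ[k] TP4 k A :=
  TensorProduct.map LinearMap.id (TensorProduct.map LinearMap.id (lTen k A))

/-- `a ⊗ b ⊗ c ↦ f(a) * g(b) * h(c)`. -/
def tmap3 (f g h : A →ₗ[k] A) : TP3 k A →ₗ[k] A :=
  mulA k A ∘ₗ TensorProduct.map f (mulA k A ∘ₗ TensorProduct.map g h)

/-- `a ⊗ b ↦ S(a) * b`, used in the antipode axiom `m ∘ (S ⊗ id) ∘ Δ = 1·ε`. -/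
def antipL (s : A →ₗ[k] A) : TP2 k A →ₗ[k] A := mulA k A ∘ₗ TensorProduct.map s LinearMap.id

/-- `a ⊗ b ↦ a * S(b)`. -/
def antipR (s : A →ₗ[k] A) : TP2 k A →ₗ[k] A := mulA k A ∘ₗ TensorProduct.map LinearMap.id s

end Gadgets

/-- Central idempotent `e₀ = (1 + K²)/2`. -/
def e0 : Q := (2:ℂ)⁻¹ • (1 + gK ^ 2)

/-- Central idempotent `e₁ = (1 − K²)/2`. -/
def e1 : Q := (2:ℂ)⁻¹ • (1 - gK ^ 2)

/-- `f⁺ = −i F`. -/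
def fp : Q := (-Complex.I) • gF

/-- `f⁻ = E K⁻¹`. -/
def fm : Q := gE * gKi

/-- The Casimir element `C = FE − (i/4)(K − K⁻¹)`. -/
def Cas : Q := gF * gE - (Complex.I / 4) • (gK - gKi)

def t2 (a b : Q) : TP2 ℂ Q := a ⊗ₜ[ℂ] b

def t3 (a b c : Q) : TP3 ℂ Q := a ⊗ₜ[ℂ] (b ⊗ₜ[ℂ] c)

def eEF : Q := gE * gF
def eEK : Q := gE * gK
def eFK : Q := gF * gK
def eEFK : Q := gE * gF * gK

/-- `Φ^{010}` component of the coassociator. -/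
def Phi010 : TP3 ℂ Q :=
  t3 1 1 1 - (1 + Complex.I) • t3 gE gK gF + (1 - Complex.I) • t3 eFK gK eEK
    + (2:ℂ) • t3 eEFK 1 eEFK

/-- `Φ^{101}` component of the coassociator. -/
def Phi101 : TP3 ℂ Q :=
  (Complex.I - 1) • t3 1 gF eEK + t3 1 gK 1 + (2:ℂ) • t3 1 eEF eEFK
    - (1 + Complex.I) • t3 1 eEK gF - (1 + Complex.I) • t3 gE eFK 1
    + (2 * Complex.I) • t3 gE eEFK gF + (1 - Complex.I) • t3 eFK gE 1
    - (2 * Complex.I) • t3 eFK eEFK eEK - (2:ℂ) • t3 eEFK eEF 1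

/-- `Φ^{111}` component of the coassociator. -/
def Phi111 (β : ℂ) : TP3 ℂ Q :=
  (Complex.I * β ^ 2) • (
    (1 + Complex.I) • t3 1 gF eEK - t3 1 gK 1 - (2:ℂ) • t3 1 eEF 1
      - (2 * Complex.I) • t3 1 eEF eEFK + (1 + Complex.I) • t3 1 eEK gF
      - (1 + Complex.I) • t3 gE 1 gF + (1 + Complex.I) • t3 gE eFK 1
      + (2 * Complex.I) • t3 gE eFK eEFK + (2:ℂ) • t3 gE eEFK gF
      - (1 + Complex.I) • t3 eFK 1 eEK + (1 + Complex.I) • t3 eFK gE 1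
      + (2 * Complex.I) • t3 eFK gE eEFK + (2:ℂ) • t3 eFK eEFK eEK
      + (2 * Complex.I) • t3 eEFK gF eEK + (2 * Complex.I) • t3 eEFK gK eEFK
      - (2 * Complex.I) • t3 eEFK eEF 1 + (2 * Complex.I) • t3 eEFK eEK gF
      + (4:ℂ) • t3 eEFK eEF eEFK)

/-- The coassociator `Φ` of the quasi-Hopf algebra structure on `Q`. -/
def Phi (β : ℂ) : TP3 ℂ Q :=
  t3 e0 e0 e0 + t3 e1 e0 e0 + Phi010 * t3 e0 e1 e0 + t3 e0 e0 e1
    + t3 e1 e1 e0 + Phi101 * t3 e1 e0 e1 + t3 e0 e1 e1 + Phi111 β * t3 e1 e1 e1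

def R00 : TP2 ℂ Q :=
  (2:ℂ)⁻¹ • ((t2 1 1 + t2 1 gK + t2 gK 1 - t2 gK gK) * (t2 1 1 + (2 * Complex.I) • t2 gE gF))

def R01 : TP2 ℂ Q :=
  (2:ℂ)⁻¹ • ((t2 1 1 - Complex.I • t2 1 gK + t2 gK 1 + Complex.I • t2 gK gK) *
    (t2 1 1 + (1 - Complex.I) • t2 eFK eEK - (1 - Complex.I) • t2 gE gF
      + (1 + Complex.I) • t2 eEFK 1 + (2 * Complex.I) • t2 eEFK eEFK))

def R10 : TP2 ℂ Q :=
  (2:ℂ)⁻¹ • ((t2 1 1 + t2 1 gK - Complex.I • t2 gK 1 + Complex.I • t2 gK gK) *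
    (t2 1 gK + (1 - Complex.I) • t2 eFK gE + (1 - Complex.I) • t2 gE eFK
      - (1 - Complex.I) • t2 1 eEF - (2 * Complex.I) • t2 eEFK eEF))

def R11 (β : ℂ) : TP2 ℂ Q :=
  (β / 2) • ((t2 1 1 - Complex.I • t2 1 gK - Complex.I • t2 gK 1 + t2 gK gK) *
    ((-Complex.I) • t2 gK 1 + (2 * Complex.I) • t2 eEK gF + (1 - Complex.I) • t2 gK eEFK
      - (1 + Complex.I) • t2 eEF 1 - (2 * Complex.I) • t2 eEF eEFK))

/-- The universal R-matrix `R` of the quasi-triangular quasi-Hopf structure on `Q`. -/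
def Rmat (β : ℂ) : TP2 ℂ Q :=
  R00 * t2 e0 e0 + R01 * t2 e0 e1 + R10 * t2 e1 e0 + R11 β * t2 e1 e1

/-- The standard R-matrix `R_st` of the quotient `Q/(K²-1)`. -/
def Rst : TP2 ℂ Q :=
  (2:ℂ)⁻¹ • ∑ m ∈ Finset.range 2, ∑ n ∈ Finset.range 2,
    ((-1:ℂ) ^ (m * n)) • (t2 (gK ^ m) (gK ^ n) * (t2 1 1 + (2 * Complex.I) • t2 gE gF))

/-- The monodromy matrix `M = R₂₁ · R`. -/
def Mmat (β : ℂ) : TP2 ℂ Q := flipA ℂ Q (Rmat β) * Rmat β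

/-- The ribbon element `v = (e₀ − iβ K e₁)(1 − 2 f⁺ f⁻)`. -/
def vRib (β : ℂ) : Q := (e0 - (Complex.I * β) • (gK * e1)) * (1 - (2:ℂ) • (fp * fm))

/-- The coevaluation element `β = e₀ − 2iβ² C e₁`. -/
def bbEl (β : ℂ) : Q := e0 - (2 * Complex.I * β ^ 2) • (Cas * e1)

/-- `b ⊗ c ↦ S(b · bb · S(c))`, inner part of the Drinfeld element. -/
def uInner (S : Q →ₗ[ℂ] Q) (bb : Q) : TP2 ℂ Q →ₗ[ℂ] Q :=
  S ∘ₗ mulA ℂ Q ∘ₗ TensorProduct.map (LinearMap.mulRight ℂ bb) S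

/-- `Φ' ⊗ Φ'' ⊗ Φ''' ↦ S(Φ'' · bb · S(Φ''')) ⊗ Φ'`. -/
def uMap1 (S : Q →ₗ[ℂ] Q) (bb : Q) : TP3 ℂ Q →ₗ[ℂ] TP2 ℂ Q :=
  TensorProduct.map (uInner S bb) LinearMap.id ∘ₗ (TensorProduct.comm ℂ Q (TP2 ℂ Q)).toLinearMap

/-- `R' ⊗ R'' ↦ S(R'') · al · R'`. -/
def uMap2 (S : Q →ₗ[ℂ] Q) (al : Q) : TP2 ℂ Q →ₗ[ℂ] Q :=
  mulA ℂ Q ∘ₗ TensorProduct.map (LinearMap.mulRight ℂ al ∘ₗ S) LinearMap.id ∘ₗ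
    (TensorProduct.comm ℂ Q Q).toLinearMap

/-- `(x ⊗ a) ⊗ (R' ⊗ R'') ↦ x · (S(R'') · al · R') · a`. -/
def uBig (S : Q →ₗ[ℂ] Q) (al : Q) : TP2 ℂ Q ⊗[ℂ] TP2 ℂ Q →ₗ[ℂ] Q :=
  mulA ℂ Q ∘ₗ TensorProduct.map LinearMap.id (mulA ℂ Q ∘ₗ (TensorProduct.comm ℂ Q Q).toLinearMap)
    ∘ₗ (TensorProduct.assoc ℂ Q Q Q).toLinearMap ∘ₗ TensorProduct.map LinearMap.id (uMap2 S al)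

/-- The Drinfeld element `u = Σ S(Φ''·b·S(Φ'''))·S(R'')·α·R'·Φ'` (with `α = 1`). -/
def uDrin (β : ℂ) (S : Q →ₗ[ℂ] Q) : Q :=
  uBig S 1 (uMap1 S (bbEl β) (Phi β) ⊗ₜ[ℂ] Rmat β)

/-- The balancing element `g = b · S(α) · v⁻¹ · u` (with `α = 1`). -/
def balG (β : ℂ) (S : Q →ₗ[ℂ] Q) : Q :=
  bbEl β * S 1 * Ring.inverse (vRib β) * uDrin β S

/-- The cointegral `c = (β²/i)·E·F·(1 + K + K² + K³)`. -/
def cInt (β : ℂ) : Q := (β ^ 2 / Complex.I) • (gE * gF * (1 + gK + gK ^ 2 + gK ^ 3))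

/-- The q-trace of a one-dimensional representation, with balancing element `K⁻¹`. -/
def qTr1 (ρ : Q →ₐ[ℂ] ℂ) : Q →ₗ[ℂ] ℂ := ρ.toLinearMap ∘ₗ LinearMap.mulLeft ℂ gK

/-- The q-trace of a two-dimensional (matrix) representation, with balancing element `K⁻¹`. -/
def qTrM (ρ : Q →ₐ[ℂ] Matrix (Fin 2) (Fin 2) ℂ) : Q →ₗ[ℂ] ℂ :=
  Matrix.traceLinearMap (Fin 2) ℂ ℂ ∘ₗ ρ.toLinearMap ∘ₗ LinearMap.mulLeft ℂ gK

/-- The Drinfeld mapping `φ ↦ (φ ⊗ id)(M)`. -/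
def drinfeldImg (β : ℂ) (φ : Q →ₗ[ℂ] ℂ) : Q :=
  (TensorProduct.lid ℂ Q) (TensorProduct.map φ LinearMap.id (Mmat β))

section Helpers
set_option maxHeartbeats 1000000
set_option synthInstance.maxHeartbeats 400000
set_option linter.unusedSimpArgs false

theorem gK_gKi : gK * gKi = 1 := by
  simpa [gK, gKi] using RingQuot.mkAlgHom_rel ℂ QRel.KKi
theorem gKi_gK : gKi * gK = 1 := by
  simpa [gK, gKi] using RingQuot.mkAlgHom_rel ℂ QRel.KiK
theorem gK4 : gK ^ 4 = 1 := by
  simpa [gK] using RingQuot.mkAlgHom_rel ℂ QRel.K4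
theorem gE2 : gE * gE = 0 := by
  simpa [gE, pow_two] using RingQuot.mkAlgHom_rel ℂ QRel.Esq
theorem gF2 : gF * gF = 0 := by
  simpa [gF, pow_two] using RingQuot.mkAlgHom_rel ℂ QRel.Fsq
theorem gKi_eq : gKi = gK ^ 3 := by
  calc gKi = gK ^ 4 * gKi := by rw [gK4, one_mul]
    _ = gK ^ 3 * (gK * gKi) := by rw [pow_succ, mul_assoc]
    _ = gK ^ 3 := by rw [gK_gKi, mul_one]
theorem qneg (x : Q) : -x = (-1 : ℂ) • x := (neg_one_smul ℂ x).symm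
theorem gK_gE : gK * gE = (-1 : ℂ) • (gE * gK) := by
  have h : gK * gE * gKi = -gE := by
    simpa [gK, gE, gKi] using RingQuot.mkAlgHom_rel ℂ QRel.KEKi
  calc gK * gE = gK * gE * (gKi * gK) := by rw [gKi_gK, mul_one]
    _ = (gK * gE * gKi) * gK := by simp only [mul_assoc]
    _ = (-1 : ℂ) • (gE * gK) := by rw [h, qneg, smul_mul_assoc]
theorem gK_gF : gK * gF = (-1 : ℂ) • (gF * gK) := by
  have h : gK * gF * gKi = -gF := by
    simpa [gK, gF, gKi] using RingQuot.mkAlgHom_rel ℂ QRel.KFKi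
  calc gK * gF = gK * gF * (gKi * gK) := by rw [gKi_gK, mul_one]
    _ = (gK * gF * gKi) * gK := by simp only [mul_assoc]
    _ = (-1 : ℂ) • (gF * gK) := by rw [h, qneg, smul_mul_assoc]
theorem gF_gE : gF * gE = gE * gF - (2 * Complex.I)⁻¹ • (gK - gK ^ 3) := by
  have h : gE * gF - gF * gE = (2 * Complex.I)⁻¹ • (gK - gKi) := by
    simpa only [gK, gF, gKi, gE, map_sub, map_mul, map_smul] using
      RingQuot.mkAlgHom_rel ℂ QRel.EF
  rw [← gKi_eq, ← h]; abel

theorem gKp_gE (l : ℕ) : gK ^ l * gE = (-1 : ℂ) ^ l • (gE * gK ^ l) := by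
  induction l with
  | zero => simp
  | succ n ih =>
    rw [pow_succ', mul_assoc, ih, mul_smul_comm, ← mul_assoc, gK_gE, smul_mul_assoc, mul_assoc,
      ← pow_succ', pow_succ (-1 : ℂ), mul_smul]
theorem gKp_gF (l : ℕ) : gK ^ l * gF = (-1 : ℂ) ^ l • (gF * gK ^ l) := by
  induction l with
  | zero => simp
  | succ n ih =>
    rw [pow_succ', mul_assoc, ih, mul_smul_comm, ← mul_assoc, gK_gF, smul_mul_assoc, mul_assoc,
      ← pow_succ', pow_succ (-1 : ℂ), mul_smul]

/-- Induction principle for `Q`. -/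
theorem Q_adjoin (S : Subalgebra ℂ Q) (hE : gE ∈ S) (hF : gF ∈ S) (hK : gK ∈ S) (x : Q) :
    x ∈ S := by
  obtain ⟨y, rfl⟩ := RingQuot.mkAlgHom_surjective ℂ QRel x
  induction y using FreeAlgebra.induction with
  | grade0 r => rw [AlgHom.commutes]; exact S.algebraMap_mem r
  | grade1 g =>
    cases g with
    | E => exact hE
    | F => exact hF
    | K => exact hK
    | Kinv =>
      have : gKi ∈ S := by rw [gKi_eq]; exact pow_mem hK 3
      exact this
  | mul a b ha hb => rw [map_mul]; exact S.mul_mem ha hb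
  | add a b ha hb => rw [map_add]; exact S.add_mem ha hb

/-- The PBW monomials with arbitrary powers of `K`. -/
def pbwSpan : Submodule ℂ Q :=
  Submodule.span ℂ {x | ∃ l : ℕ, x = gK ^ l ∨ x = gE * gK ^ l ∨ x = gF * gK ^ l ∨
    x = gE * gF * gK ^ l}

theorem pbw1 (l : ℕ) : gK ^ l ∈ pbwSpan := Submodule.subset_span ⟨l, Or.inl rfl⟩
theorem pbw2 (l : ℕ) : gE * gK ^ l ∈ pbwSpan := Submodule.subset_span ⟨l, Or.inr (Or.inl rfl)⟩
theorem pbw3 (l : ℕ) : gF * gK ^ l ∈ pbwSpan :=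
  Submodule.subset_span ⟨l, Or.inr (Or.inr (Or.inl rfl))⟩
theorem pbw4 (l : ℕ) : gE * gF * gK ^ l ∈ pbwSpan :=
  Submodule.subset_span ⟨l, Or.inr (Or.inr (Or.inr rfl))⟩

theorem pbw_of_gen (g : Q) (h1 : ∀ l : ℕ, g * gK ^ l ∈ pbwSpan)
    (h2 : ∀ l : ℕ, g * (gE * gK ^ l) ∈ pbwSpan) (h3 : ∀ l : ℕ, g * (gF * gK ^ l) ∈ pbwSpan)
    (h4 : ∀ l : ℕ, g * (gE * gF * gK ^ l) ∈ pbwSpan) (y : Q) (hy : y ∈ pbwSpan) :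
    g * y ∈ pbwSpan := by
  induction hy using Submodule.span_induction with
  | mem x hx =>
    obtain ⟨l, rfl | rfl | rfl | rfl⟩ := hx
    exacts [h1 l, h2 l, h3 l, h4 l]
  | zero => simp
  | add a b _ _ ha hb => rw [mul_add]; exact add_mem ha hb
  | smul r a _ ha => rw [mul_smul_comm]; exact Submodule.smul_mem _ r ha

/-- Elements whose left multiplication preserves the PBW span. -/
def pbwStab : Subalgebra ℂ Q where
  carrier := {x | ∀ y ∈ pbwSpan, x * y ∈ pbwSpan}
  mul_mem' := by
    intro a b ha hb y hy
    rw [mul_assoc]; exact ha _ (hb _ hy)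
  add_mem' := by
    intro a b ha hb y hy
    rw [add_mul]; exact add_mem (ha _ hy) (hb _ hy)
  algebraMap_mem' := by
    intro r y hy
    rw [← Algebra.smul_def]; exact Submodule.smul_mem _ r hy

theorem pbw_top (x : Q) : x ∈ pbwSpan := by
  have h1 : (1 : Q) ∈ pbwSpan := by simpa using pbw1 0
  have hx : x ∈ pbwStab := by
    apply Q_adjoin
    · refine pbw_of_gen gE pbw2 (fun l => ?_) (fun l => ?_) (fun l => ?_)
      · rw [← mul_assoc, gE2, zero_mul]; exact zero_mem _
      · rw [← mul_assoc]; exact pbw4 l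
      · rw [← mul_assoc, ← mul_assoc, gE2, zero_mul, zero_mul]; exact zero_mem _
    · have key : ∀ y : Q, gF * (gE * y) = gE * gF * y -
          (2 * Complex.I)⁻¹ • (gK * y - gK ^ 3 * y) := by
        intro y
        rw [← mul_assoc, gF_gE, sub_mul, smul_mul_assoc, sub_mul]
      refine pbw_of_gen gF pbw3 (fun l => ?_) (fun l => ?_) (fun l => ?_)
      · rw [key]
        refine sub_mem (pbw4 l) (Submodule.smul_mem _ _ (sub_mem ?_ ?_))
        · rw [← pow_succ']; exact pbw1 _
        · rw [← pow_add]; exact pbw1 _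
      · rw [← mul_assoc, gF2, zero_mul]; exact zero_mem _
      · rw [mul_assoc gE, key]
        refine sub_mem ?_ (Submodule.smul_mem _ _ (sub_mem ?_ ?_))
        · rw [mul_assoc, ← mul_assoc gF, gF2, zero_mul, mul_zero]; exact zero_mem _
        · rw [← mul_assoc, gK_gF, smul_mul_assoc, mul_assoc, ← pow_succ']; exact Submodule.smul_mem _ _ (pbw3 _)
        · rw [← mul_assoc, gKp_gF, smul_mul_assoc, mul_assoc, ← pow_add]
          exact Submodule.smul_mem _ _ (pbw3 _)
    · refine pbw_of_gen gK (fun l => ?_) (fun l => ?_) (fun l => ?_) (fun l => ?_)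
      · rw [← pow_succ']; exact pbw1 _
      · rw [← mul_assoc, gK_gE, smul_mul_assoc, mul_assoc, ← pow_succ']; exact Submodule.smul_mem _ _ (pbw2 _)
      · rw [← mul_assoc, gK_gF, smul_mul_assoc, mul_assoc, ← pow_succ']; exact Submodule.smul_mem _ _ (pbw3 _)
      · rw [← mul_assoc, ← mul_assoc, gK_gE, smul_mul_assoc, mul_assoc gE, gK_gF, mul_smul_comm,
          smul_mul_assoc, smul_mul_assoc, ← mul_assoc, mul_assoc, ← pow_succ']
        exact Submodule.smul_mem _ _ (Submodule.smul_mem _ _ (pbw4 _))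
  simpa using hx 1 h1

theorem gK_mod (l : ℕ) : gK ^ l = gK ^ (l % 4) := by
  conv_lhs => rw [← Nat.div_add_mod l 4, pow_add, pow_mul, gK4, one_pow, one_mul]

theorem Q_linear_ext {V : Type} [AddCommGroup V] [Module ℂ V] (f g : Q →ₗ[ℂ] V)
    (h1 : ∀ l : ℕ, f (gK ^ l) = g (gK ^ l)) (h2 : ∀ l : ℕ, f (gE * gK ^ l) = g (gE * gK ^ l))
    (h3 : ∀ l : ℕ, f (gF * gK ^ l) = g (gF * gK ^ l))
    (h4 : ∀ l : ℕ, f (gE * gF * gK ^ l) = g (gE * gF * gK ^ l)) : f = g := by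
  ext x
  have hx := pbw_top x
  induction hx using Submodule.span_induction with
  | mem x hx =>
    obtain ⟨l, rfl | rfl | rfl | rfl⟩ := hx
    exacts [h1 l, h2 l, h3 l, h4 l]
  | zero => simp
  | add a b _ _ ha hb => rw [map_add, map_add, ha, hb]
  | smul r a _ ha => rw [map_smul, map_smul, ha]

/-- Values of the functional on the monomials. -/
theorem mu_vals (κ : ℂ) (μ : Q →ₗ[ℂ] ℂ)
    (h : ∀ (m n : Fin 2) (l : Fin 4),
        μ (gE ^ (m : ℕ) * gF ^ (n : ℕ) * gK ^ (l : ℕ)) =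
          if m = 1 ∧ n = 1 ∧ l = 3 then κ else 0) (l : ℕ) :
    μ (gK ^ l) = 0 ∧ μ (gE * gK ^ l) = 0 ∧ μ (gF * gK ^ l) = 0 ∧
      μ (gE * gF * gK ^ l) = if l % 4 = 3 then κ else 0 := by
  have hl : l % 4 < 4 := Nat.mod_lt _ (by norm_num)
  rw [gK_mod l]
  have a := h 0 0 ⟨l % 4, hl⟩
  have b := h 1 0 ⟨l % 4, hl⟩
  have c := h 0 1 ⟨l % 4, hl⟩
  have d := h 1 1 ⟨l % 4, hl⟩
  simp [Fin.ext_iff] at a b c d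
  exact ⟨a, b, c, d⟩

theorem right_int (κ : ℂ) (μ : Q →ₗ[ℂ] ℂ)
    (h : ∀ l : ℕ, μ (gK ^ l) = 0 ∧ μ (gE * gK ^ l) = 0 ∧ μ (gF * gK ^ l) = 0 ∧
      μ (gE * gF * gK ^ l) = if l % 4 = 3 then κ else 0)
    (Δ : Q →ₐ[ℂ] TP2 ℂ Q)
    (hΔE : Δ gE = (1:Q) ⊗ₜ[ℂ] gE + gE ⊗ₜ[ℂ] gK)
    (hΔF : Δ gF = gKi ⊗ₜ[ℂ] gF + gF ⊗ₜ[ℂ] (1:Q))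
    (hΔK : Δ gK = gK ⊗ₜ[ℂ] gK) (x : Q) :
    (TensorProduct.lid ℂ Q) (TensorProduct.map μ LinearMap.id (Δ x)) = μ x • 1 := by
  have e : (TensorProduct.lid ℂ Q).toLinearMap ∘ₗ (TensorProduct.map μ LinearMap.id) ∘ₗ
      Δ.toLinearMap = μ.smulRight (1 : Q) := by
    apply Q_linear_ext
    · intro l
      simp [hΔK, Algebra.TensorProduct.tmul_pow, (h l).1]
    · intro l
      simp [hΔK, hΔE, Algebra.TensorProduct.tmul_pow, add_mul, (h l).1, (h l).2.1]
    · intro l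
      simp [hΔK, hΔF, Algebra.TensorProduct.tmul_pow, add_mul, gKi_eq, ← pow_add, (h _).1,
        (h l).2.2.1]
    · intro l
      simp [hΔK, hΔF, hΔE, Algebra.TensorProduct.tmul_pow, add_mul, mul_add, gKi_eq, ← pow_add,
        (h _).1, (h l).2.2.1, mul_assoc gE (gK ^ 3), (h _).2.1, (h l).2.2.2]
      by_cases hl : l % 4 = 3
      · rw [if_pos hl, if_pos hl, ← pow_succ', gK_mod]
        have : (l + 1) % 4 = 0 := by omega
        simp [this]
      · rw [if_neg hl, if_neg hl]
  exact congrArg (fun f => f x) e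

theorem gc (β : ℂ) : gE * cInt β = 0 ∧ gF * cInt β = 0 ∧ gK * cInt β = cInt β ∧
    cInt β * gE = 0 ∧ cInt β * gF = 0 ∧ cInt β * gK = cInt β := by
  have hK : gK * (1 + gK + gK ^ 2 + gK ^ 3) = 1 + gK + gK ^ 2 + gK ^ 3 := by
    have : gK * (1 + gK + gK ^ 2 + gK ^ 3) = gK + gK ^ 2 + gK ^ 3 + gK ^ 4 := by noncomm_ring
    rw [this, gK4]; abel
  have hK' : (1 + gK + gK ^ 2 + gK ^ 3) * gK = 1 + gK + gK ^ 2 + gK ^ 3 := by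
    have : (1 + gK + gK ^ 2 + gK ^ 3) * gK = gK + gK ^ 2 + gK ^ 3 + gK ^ 4 := by noncomm_ring
    rw [this, gK4]; abel
  have hKF : gK * (gE * gF) = gE * gF * gK := by
    rw [← mul_assoc, gK_gE, smul_mul_assoc, mul_assoc, gK_gF, mul_smul_comm, smul_smul, mul_assoc]
    simp
  obtain ⟨s, hs⟩ : ∃ s, s = 1 + gK + gK ^ 2 + gK ^ 3 := ⟨_, rfl⟩
  obtain ⟨s', hs'⟩ : ∃ s', s' = 1 + (-1 : ℂ) • gK + gK ^ 2 + (-1 : ℂ) • gK ^ 3 := ⟨_, rfl⟩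
  have hE : s * gE = gE * s' := by
    have e1 := gKp_gE 1
    have e2 := gKp_gE 2
    have e3 := gKp_gE 3
    simp only [pow_one] at e1
    rw [hs, hs', add_mul, add_mul, add_mul, e1, e2, e3]
    simp only [mul_add, mul_smul_comm, one_mul, mul_one]
    norm_num
  have hF : s * gF = gF * s' := by
    have e1 := gKp_gF 1
    have e2 := gKp_gF 2
    have e3 := gKp_gF 3
    simp only [pow_one] at e1
    rw [hs, hs', add_mul, add_mul, add_mul, e1, e2, e3]
    simp only [mul_add, mul_smul_comm, one_mul, mul_one]
    norm_num
  rw [← hs] at hK hK'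
  have h3 : gK ^ 3 = gK * (gK * gK) := by noncomm_ring
  have hK3 : gK ^ 3 * s = s := by
    rw [h3, mul_assoc, mul_assoc, hK, hK, hK]
  have hs1 : gK * s' = (-1 : ℂ) • s' := by
    have : gK * s' = gK + (-1 : ℂ) • gK ^ 2 + gK ^ 3 + (-1 : ℂ) • gK ^ 4 := by
      rw [hs']
      simp only [mul_add, mul_smul_comm, mul_one, ← pow_succ', ← pow_two]
    rw [this, gK4, hs']
    module
  have hK3' : gK ^ 3 * s' = (-1 : ℂ) • s' := by
    rw [h3, mul_assoc, mul_assoc, hs1, mul_smul_comm, hs1, mul_smul_comm, mul_smul_comm, hs1]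
    module
  have hFKs : gF * (gE * (gF * s)) = 0 := by
    rw [← mul_assoc, gF_gE, sub_mul, smul_mul_assoc, sub_mul, mul_assoc gE, ← mul_assoc gF gF,
      gF2, zero_mul, mul_zero, ← mul_assoc gK, gK_gF, ← mul_assoc (gK ^ 3), gKp_gF, smul_mul_assoc,
      smul_mul_assoc, mul_assoc, mul_assoc, hK, hK3]
    module
  have hEs : gE * (gF * (gE * s')) = 0 := by
    rw [← mul_assoc gF, gF_gE, sub_mul, smul_mul_assoc, sub_mul, hs1, hK3', mul_sub, mul_assoc,
      ← mul_assoc, gE2, zero_mul, sub_self, smul_zero, mul_zero, sub_self]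
  unfold cInt
  rw [← hs]
  refine ⟨?_, ?_, ?_, ?_, ?_, ?_⟩
  · rw [mul_smul_comm, ← mul_assoc, ← mul_assoc, gE2, zero_mul, zero_mul, smul_zero]
  · rw [mul_smul_comm, mul_assoc gE, hFKs, smul_zero]
  · rw [mul_smul_comm, ← mul_assoc, hKF, mul_assoc, hK]
  · rw [smul_mul_assoc, mul_assoc, hE, mul_assoc, hEs, smul_zero]
  · rw [smul_mul_assoc, mul_assoc, hF, ← mul_assoc, mul_assoc gE, gF2, mul_zero, zero_mul,
      smul_zero]
  · rw [smul_mul_assoc, mul_assoc, hK']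

theorem coint (β : ℂ) (ce : Q →ₐ[ℂ] ℂ) (hceE : ce gE = 0) (hceF : ce gF = 0)
    (hceK : ce gK = 1) (x : Q) :
    x * cInt β = ce x • cInt β ∧ cInt β * x = ce x • cInt β := by
  obtain ⟨c1, c2, c3, c4, c5, c6⟩ := gc β
  let S : Subalgebra ℂ Q :=
    { carrier := {x | x * cInt β = ce x • cInt β ∧ cInt β * x = ce x • cInt β}
      mul_mem' := by
        rintro a b ⟨ha, ha'⟩ ⟨hb, hb'⟩
        refine ⟨?_, ?_⟩
        · rw [mul_assoc, hb, mul_smul_comm, ha, smul_smul, map_mul, mul_comm]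
        · rw [← mul_assoc, ha', smul_mul_assoc, hb', smul_smul, map_mul]
      add_mem' := by
        rintro a b ⟨ha, ha'⟩ ⟨hb, hb'⟩
        refine ⟨?_, ?_⟩
        · rw [add_mul, ha, hb, map_add, add_smul]
        · rw [mul_add, ha', hb', map_add, add_smul]
      algebraMap_mem' := by
        intro r
        refine ⟨?_, ?_⟩
        · rw [AlgHom.commutes, ← Algebra.smul_def]; rfl
        · rw [AlgHom.commutes, ← Algebra.commutes, ← Algebra.smul_def]; rfl }
  refine Q_adjoin S ?_ ?_ ?_ x
  · exact ⟨by rw [c1, hceE, zero_smul], by rw [c4, hceE, zero_smul]⟩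
  · exact ⟨by rw [c2, hceF, zero_smul], by rw [c5, hceF, zero_smul]⟩
  · exact ⟨by rw [c3, hceK, one_smul], by rw [c6, hceK, one_smul]⟩


/-- The matrix algebra acting on the module induced from a character of `⟨K⟩`. -/
abbrev M4 : Type := Matrix (Fin 4) (Fin 4) ℂ

def mK (a : ℂ) : M4 := !![a, 0, 0, 0; 0, -a, 0, 0; 0, 0, -a, 0; 0, 0, 0, a]
def mE : M4 := !![0, 0, 0, 0; 1, 0, 0, 0; 0, 0, 0, 0; 0, 0, 1, 0]
def mF (c : ℂ) : M4 := !![0, -c, 0, 0; 0, 0, 0, 0; 1, 0, 0, c; 0, 1, 0, 0]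

/-- Images of the generators. -/
def genImg (a : ℂ) : QGen → M4
  | .E => mE
  | .F => mF ((2 * Complex.I)⁻¹ * (a - a ^ 3))
  | .K => mK a
  | .Kinv => mK (a ^ 3)

theorem mK_mul (a b : ℂ) : mK a * mK b =
    !![a * b, 0, 0, 0; 0, a * b, 0, 0; 0, 0, a * b, 0; 0, 0, 0, a * b] := by
  ext i j
  fin_cases i <;> fin_cases j <;> simp [mK, Matrix.mul_apply, Fin.sum_univ_four]

theorem one_M4 : (1 : M4) = !![1, 0, 0, 0; 0, 1, 0, 0; 0, 0, 1, 0; 0, 0, 0, 1] := by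
  ext i j
  fin_cases i <;> fin_cases j <;> simp

/-- The representation of `Q` induced from the character `K ↦ a`. -/
def rho (a : ℂ) (ha : a ^ 4 = 1) : Q →ₐ[ℂ] M4 :=
  RingQuot.liftAlgHom ℂ ⟨FreeAlgebra.lift ℂ (genImg a), by
    have h4 : a * a ^ 3 = 1 := by rw [← ha]; ring
    have h4' : a ^ 3 * a = 1 := by rw [← ha]; ring
    intro x y h
    cases h with
    | KKi => simp [ιK, ιKi, genImg, mK_mul, one_M4, h4]
    | KiK => simp [ιK, ιKi, genImg, mK_mul, one_M4, h4']
    | KEKi =>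
      simp only [ιK, ιE, ιKi, genImg, map_mul, map_neg, FreeAlgebra.lift_ι_apply]
      ext i j
      fin_cases i <;> fin_cases j <;>
        simp [mK, mE, Matrix.mul_apply, Fin.sum_univ_four, h4]
    | KFKi =>
      simp only [ιK, ιF, ιKi, genImg, map_mul, map_neg, FreeAlgebra.lift_ι_apply]
      generalize (2 * Complex.I)⁻¹ * (a - a ^ 3) = c
      ext i j
      fin_cases i <;> fin_cases j <;>
        simp [mK, mF, Matrix.mul_apply, Fin.sum_univ_four, h4] <;>
        first | linear_combination c * ha | linear_combination (-c) * ha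
    | EF =>
      simp only [ιK, ιF, ιE, ιKi, genImg, map_mul, map_sub, map_smul, FreeAlgebra.lift_ι_apply]
      ext i j
      fin_cases i <;> fin_cases j <;>
        simp [mK, mE, mF, Matrix.mul_apply, Fin.sum_univ_four] <;> ring
    | Esq =>
      simp only [ιE, genImg, map_mul, pow_two, FreeAlgebra.lift_ι_apply, map_zero]
      ext i j
      fin_cases i <;> fin_cases j <;>
        simp [mE, Matrix.mul_apply, Fin.sum_univ_four]
    | Fsq =>
      simp only [ιF, genImg, map_mul, pow_two, FreeAlgebra.lift_ι_apply, map_zero]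
      ext i j
      fin_cases i <;> fin_cases j <;>
        simp [mF, Matrix.mul_apply, Fin.sum_univ_four]
    | K4 =>
      simp only [ιK, genImg, map_pow, FreeAlgebra.lift_ι_apply, map_one]
      have : mK a ^ 4 = (mK a * mK a) * (mK a * mK a) := by noncomm_ring
      rw [this, mK_mul, one_M4]
      ext i j
      fin_cases i <;> fin_cases j <;>
        simp [Matrix.mul_apply, Fin.sum_univ_four] <;> linear_combination ha⟩

section
variable (a : ℂ) (ha : a ^ 4 = 1)

theorem rho_E : rho a ha gE = mE := by
  simp [rho, gE, ιE, RingQuot.liftAlgHom_mkAlgHom_apply, genImg]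
theorem rho_F : rho a ha gF = mF ((2 * Complex.I)⁻¹ * (a - a ^ 3)) := by
  simp [rho, gF, ιF, RingQuot.liftAlgHom_mkAlgHom_apply, genImg]
theorem rho_K : rho a ha gK = mK a := by
  simp [rho, gK, ιK, RingQuot.liftAlgHom_mkAlgHom_apply, genImg]

theorem mK_pow (l : ℕ) : mK a ^ l = Matrix.diagonal ![a ^ l, (-a) ^ l, (-a) ^ l, a ^ l] := by
  have : mK a = Matrix.diagonal ![a, -a, -a, a] := by
    ext i j
    fin_cases i <;> fin_cases j <;> simp [mK]
  rw [this, Matrix.diagonal_pow]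
  congr 1
  ext i
  fin_cases i <;> simp

/-- The coefficient of `E F v` in `x v`. -/
def coef : Q →ₗ[ℂ] ℂ where
  toFun x := rho a ha x 3 0
  map_add' x y := by simp
  map_smul' r x := by simp

theorem coef_vals (l : ℕ) : coef a ha (gK ^ l) = 0 ∧ coef a ha (gE * gK ^ l) = 0 ∧
    coef a ha (gF * gK ^ l) = 0 ∧ coef a ha (gE * gF * gK ^ l) = a ^ l := by
  refine ⟨?_, ?_, ?_, ?_⟩ <;>
    simp [coef, rho_E, rho_F, rho_K, mK_pow, mE, mF, Matrix.mul_apply, Fin.sum_univ_four]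
end

theorem p1 : (1 : ℂ) ^ 4 = 1 := by norm_num
theorem p2 : (-1 : ℂ) ^ 4 = 1 := by norm_num
theorem p3 : (Complex.I : ℂ) ^ 4 = 1 := Complex.I_pow_four
theorem p4 : (-Complex.I : ℂ) ^ 4 = 1 := by rw [Even.neg_pow (by decide), p3]

/-- The functional `μ`. -/
def mu0 (κ : ℂ) : Q →ₗ[ℂ] ℂ :=
  (κ / 4) • (coef 1 p1 + (-1 : ℂ) • coef (-1) p2 + Complex.I • coef Complex.I p3
    + (-Complex.I) • coef (-Complex.I) p4)

theorem mu0_vals (κ : ℂ) (l : ℕ) :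
    mu0 κ (gK ^ l) = 0 ∧ mu0 κ (gE * gK ^ l) = 0 ∧ mu0 κ (gF * gK ^ l) = 0 ∧
      mu0 κ (gE * gF * gK ^ l) = if l % 4 = 3 then κ else 0 := by
  have h1 := coef_vals 1 p1 l
  have h2 := coef_vals (-1) p2 l
  have h3 := coef_vals Complex.I p3 l
  have h4 := coef_vals (-Complex.I) p4 l
  refine ⟨by simp [mu0, h1.1, h2.1, h3.1, h4.1], by simp [mu0, h1.2.1, h2.2.1, h3.2.1, h4.2.1],
    by simp [mu0, h1.2.2.1, h2.2.2.1, h3.2.2.1, h4.2.2.1], ?_⟩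
  have key : ∀ c : ℂ, c ^ 4 = 1 → c ^ l = c ^ (l % 4) := by
    intro c hc
    conv_lhs => rw [← Nat.div_add_mod l 4, pow_add, pow_mul, hc, one_pow, one_mul]
  simp only [mu0, LinearMap.smul_apply, LinearMap.add_apply, h1.2.2.2, h2.2.2.2, h3.2.2.2,
    h4.2.2.2, smul_eq_mul]
  rw [key _ p1, key _ p2, key _ p3, key _ p4]
  have hl : l % 4 < 4 := Nat.mod_lt _ (by norm_num)
  generalize l % 4 = r at hl
  have hI : Complex.I ^ 2 = -1 := Complex.I_sq
  interval_cases r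
  · norm_num
  · norm_num
  · norm_num
  · norm_num
    linear_combination (κ / 4) * p3

theorem mu_eq (κ : ℂ) (μ : Q →ₗ[ℂ] ℂ)
    (h : ∀ l : ℕ, μ (gK ^ l) = 0 ∧ μ (gE * gK ^ l) = 0 ∧ μ (gF * gK ^ l) = 0 ∧
      μ (gE * gF * gK ^ l) = if l % 4 = 3 then κ else 0) : μ = mu0 κ := by
  apply Q_linear_ext
  · intro l; rw [(h l).1, (mu0_vals κ l).1]
  · intro l; rw [(h l).2.1, (mu0_vals κ l).2.1]
  · intro l; rw [(h l).2.2.1, (mu0_vals κ l).2.2.1]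
  · intro l; rw [(h l).2.2.2, (mu0_vals κ l).2.2.2]

theorem mu0_fin (κ : ℂ) (m n : Fin 2) (l : Fin 4) :
    mu0 κ (gE ^ (m : ℕ) * gF ^ (n : ℕ) * gK ^ (l : ℕ)) =
      if m = 1 ∧ n = 1 ∧ l = 3 then κ else 0 := by
  have h := mu0_vals κ l
  have hl : (l : ℕ) % 4 = l := Nat.mod_eq_of_lt l.2
  rw [hl] at h
  fin_cases m <;> fin_cases n
  · simpa using h.1
  · simpa using h.2.2.1
  · simpa using h.2.1
  · simpa [Fin.ext_iff] using h.2.2.2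

theorem mu_cInt (β : ℂ) (hβ : β ^ 4 = -1) (μ : Q →ₗ[ℂ] ℂ)
    (h : ∀ l : ℕ, μ (gK ^ l) = 0 ∧ μ (gE * gK ^ l) = 0 ∧ μ (gF * gK ^ l) = 0 ∧
      μ (gE * gF * gK ^ l) = if l % 4 = 3 then β ^ 2 / Complex.I else 0) : μ (cInt β) = 1 := by
  have h0 := (h 0).2.2.2
  have h1 := (h 1).2.2.2
  have h2 := (h 2).2.2.2
  have h3 := (h 3).2.2.2
  norm_num at h0 h1 h2 h3
  simp only [cInt, mul_add, map_smul, map_add, mul_one, h0, h1, h2, h3, smul_eq_mul]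
  rw [Complex.div_I]
  linear_combination (-1 : ℂ) * hβ + β ^ 4 * Complex.I_sq

/-- Right multiplication by the transpose, as an algebra map. -/
def rTr : M4 →ₐ[ℂ] Module.End ℂ M4 where
  toFun y := LinearMap.mulRight ℂ y.transpose
  map_one' := by ext; simp
  map_mul' x y := by ext1 X; simp [Matrix.mul_assoc]
  map_zero' := by ext; simp
  map_add' x y := by ext1 X; simp [Matrix.mul_add]
  commutes' r := by
    ext1 X
    simp [Algebra.algebraMap_eq_smul_one]

/-- Action of `Q ⊗ Q` on the tensor product of two induced modules. -/
def Phi2 (a b : ℂ) (ha : a ^ 4 = 1) (hb : b ^ 4 = 1) : TP2 ℂ Q →ₐ[ℂ] Module.End ℂ M4 :=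
  Algebra.TensorProduct.lift ((Algebra.lmul ℂ M4).comp (rho a ha)) (rTr.comp (rho b hb)) (by
    intro x y
    ext1 X
    simp [rTr, Matrix.mul_assoc])

theorem Phi2_t2 (a b : ℂ) (ha : a ^ 4 = 1) (hb : b ^ 4 = 1) (x y : Q) (X : M4) :
    Phi2 a b ha hb (t2 x y) X = rho a ha x * X * (rho b hb y).transpose := by
  simp [Phi2, t2, rTr, Matrix.mul_assoc]

def E00 : M4 := !![1, 0, 0, 0; 0, 0, 0, 0; 0, 0, 0, 0; 0, 0, 0, 0]

theorem coef_coef (a b : ℂ) (ha : a ^ 4 = 1) (hb : b ^ 4 = 1) (x y : Q) :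
    coef a ha x * coef b hb y = Phi2 a b ha hb (t2 x y) E00 3 3 := by
  rw [Phi2_t2]
  simp [coef, E00, Matrix.mul_apply, Fin.sum_univ_four]

/-- The matrix coefficient of the action. -/
def ent (a b : ℂ) (ha : a ^ 4 = 1) (hb : b ^ 4 = 1) : TP2 ℂ Q →ₗ[ℂ] ℂ where
  toFun T := Phi2 a b ha hb T E00 3 3
  map_add' x y := by simp
  map_smul' r x := by simp

theorem map_coef (a b : ℂ) (ha : a ^ 4 = 1) (hb : b ^ 4 = 1) (T : TP2 ℂ Q) :
    (TensorProduct.lid ℂ ℂ) (TensorProduct.map (coef a ha) (coef b hb) T) = ent a b ha hb T := by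
  have : (TensorProduct.lid ℂ ℂ).toLinearMap ∘ₗ (TensorProduct.map (coef a ha) (coef b hb)) =
      ent a b ha hb := by
    apply TensorProduct.ext'
    intro x y
    exact (by simp : _ = coef a ha x * coef b hb y).trans (coef_coef a b ha hb x y)
  exact congrArg (fun f => f T) this


theorem flip_mul (x y : TP2 ℂ Q) : flipA ℂ Q (x * y) = flipA ℂ Q x * flipA ℂ Q y :=
  map_mul (Algebra.TensorProduct.comm ℂ Q Q) x y

theorem flip_t2 (x y : Q) : flipA ℂ Q (t2 x y) = t2 y x := by
  simp [flipA, t2]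

section
variable (a b : ℂ) (ha : a ^ 4 = 1) (hb : b ^ 4 = 1)

theorem rho_K2 : rho a ha (gK ^ 2) = (a ^ 2) • (1 : M4) := by
  rw [map_pow, rho_K, pow_two, mK_mul, one_M4]
  ext i j
  fin_cases i <;> fin_cases j <;> simp [pow_two]

theorem rho_e0 : rho a ha e0 = ((1 + a ^ 2) / 2) • (1 : M4) := by
  simp only [e0, map_smul, map_add, map_one, rho_K2]
  module

theorem rho_e1 : rho a ha e1 = ((1 - a ^ 2) / 2) • (1 : M4) := by
  simp only [e1, map_smul, map_sub, map_one, rho_K2]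
  module

theorem Phi2_t2_scal (x y : Q) (r s : ℂ) (hx : rho a ha x = r • 1) (hy : rho b hb y = s • 1) :
    Phi2 a b ha hb (t2 x y) = (r * s) • 1 := by
  ext1 X
  rw [Phi2_t2, hx, hy]
  simp [smul_smul, mul_comm]

theorem Phi2_R (β : ℂ) : Phi2 a b ha hb (Rmat β) =
    ((1 + a ^ 2) / 2 * ((1 + b ^ 2) / 2)) • Phi2 a b ha hb R00
    + ((1 + a ^ 2) / 2 * ((1 - b ^ 2) / 2)) • Phi2 a b ha hb R01
    + ((1 - a ^ 2) / 2 * ((1 + b ^ 2) / 2)) • Phi2 a b ha hb R10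
    + ((1 - a ^ 2) / 2 * ((1 - b ^ 2) / 2)) • Phi2 a b ha hb (R11 β) := by
  simp only [Rmat, map_add, map_mul, Phi2_t2_scal a b ha hb _ _ _ _ (rho_e0 a ha) (rho_e0 b hb),
    Phi2_t2_scal a b ha hb _ _ _ _ (rho_e0 a ha) (rho_e1 b hb),
    Phi2_t2_scal a b ha hb _ _ _ _ (rho_e1 a ha) (rho_e0 b hb),
    Phi2_t2_scal a b ha hb _ _ _ _ (rho_e1 a ha) (rho_e1 b hb), mul_smul_comm, mul_one]

theorem Phi2_Rf (β : ℂ) : Phi2 a b ha hb (flipA ℂ Q (Rmat β)) =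
    ((1 + a ^ 2) / 2 * ((1 + b ^ 2) / 2)) • Phi2 a b ha hb (flipA ℂ Q R00)
    + ((1 - a ^ 2) / 2 * ((1 + b ^ 2) / 2)) • Phi2 a b ha hb (flipA ℂ Q R01)
    + ((1 + a ^ 2) / 2 * ((1 - b ^ 2) / 2)) • Phi2 a b ha hb (flipA ℂ Q R10)
    + ((1 - a ^ 2) / 2 * ((1 - b ^ 2) / 2)) • Phi2 a b ha hb (flipA ℂ Q (R11 β)) := by
  simp only [Rmat, map_add, map_mul, flip_mul, flip_t2,
    Phi2_t2_scal a b ha hb _ _ _ _ (rho_e0 a ha) (rho_e0 b hb),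
    Phi2_t2_scal a b ha hb _ _ _ _ (rho_e0 a ha) (rho_e1 b hb),
    Phi2_t2_scal a b ha hb _ _ _ _ (rho_e1 a ha) (rho_e0 b hb),
    Phi2_t2_scal a b ha hb _ _ _ _ (rho_e1 a ha) (rho_e1 b hb), mul_smul_comm, mul_one]

theorem ent_M (β : ℂ) : ent a b ha hb (Mmat β) =
    Phi2 a b ha hb (flipA ℂ Q (Rmat β)) (Phi2 a b ha hb (Rmat β) E00) 3 3 := by
  simp [ent, Mmat]

theorem mK_l0 (a : ℂ) (X : M4) (j : Fin 4) : (mK a * X) 0 j = a * X 0 j := by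
  simp [mK, Matrix.mul_apply, Fin.sum_univ_four]
theorem mK_l1 (a : ℂ) (X : M4) (j : Fin 4) : (mK a * X) 1 j = -(a * X 1 j) := by
  simp [mK, Matrix.mul_apply, Fin.sum_univ_four]
theorem mK_l2 (a : ℂ) (X : M4) (j : Fin 4) : (mK a * X) 2 j = -(a * X 2 j) := by
  simp [mK, Matrix.mul_apply, Fin.sum_univ_four]
theorem mK_l3 (a : ℂ) (X : M4) (j : Fin 4) : (mK a * X) 3 j = a * X 3 j := by
  simp [mK, Matrix.mul_apply, Fin.sum_univ_four]
theorem mK_r0 (a : ℂ) (X : M4) (j : Fin 4) : (X * Matrix.transpose (mK a)) j 0 = a * X j 0 := by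
  simp [mK, Matrix.mul_apply, Fin.sum_univ_four, mul_comm]
theorem mK_r1 (a : ℂ) (X : M4) (j : Fin 4) : (X * Matrix.transpose (mK a)) j 1 = -(a * X j 1) := by
  simp [mK, Matrix.mul_apply, Fin.sum_univ_four, mul_comm]
theorem mK_r2 (a : ℂ) (X : M4) (j : Fin 4) : (X * Matrix.transpose (mK a)) j 2 = -(a * X j 2) := by
  simp [mK, Matrix.mul_apply, Fin.sum_univ_four, mul_comm]
theorem mK_r3 (a : ℂ) (X : M4) (j : Fin 4) : (X * Matrix.transpose (mK a)) j 3 = a * X j 3 := by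
  simp [mK, Matrix.mul_apply, Fin.sum_univ_four, mul_comm]
theorem mE_l0 (X : M4) (j : Fin 4) : (mE * X) 0 j = 0 := by
  simp [mE, Matrix.mul_apply, Fin.sum_univ_four]
theorem mE_l1 (X : M4) (j : Fin 4) : (mE * X) 1 j = X 0 j := by
  simp [mE, Matrix.mul_apply, Fin.sum_univ_four]
theorem mE_l2 (X : M4) (j : Fin 4) : (mE * X) 2 j = 0 := by
  simp [mE, Matrix.mul_apply, Fin.sum_univ_four]
theorem mE_l3 (X : M4) (j : Fin 4) : (mE * X) 3 j = X 2 j := by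
  simp [mE, Matrix.mul_apply, Fin.sum_univ_four]
theorem mE_r0 (X : M4) (j : Fin 4) : (X * Matrix.transpose mE) j 0 = 0 := by
  simp [mE, Matrix.mul_apply, Fin.sum_univ_four, mul_comm]
theorem mE_r1 (X : M4) (j : Fin 4) : (X * Matrix.transpose mE) j 1 = X j 0 := by
  simp [mE, Matrix.mul_apply, Fin.sum_univ_four, mul_comm]
theorem mE_r2 (X : M4) (j : Fin 4) : (X * Matrix.transpose mE) j 2 = 0 := by
  simp [mE, Matrix.mul_apply, Fin.sum_univ_four, mul_comm]
theorem mE_r3 (X : M4) (j : Fin 4) : (X * Matrix.transpose mE) j 3 = X j 2 := by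
  simp [mE, Matrix.mul_apply, Fin.sum_univ_four, mul_comm]
theorem mF_l0 (c : ℂ) (X : M4) (j : Fin 4) : (mF c * X) 0 j = -(c * X 1 j) := by
  simp [mF, Matrix.mul_apply, Fin.sum_univ_four]
theorem mF_l1 (c : ℂ) (X : M4) (j : Fin 4) : (mF c * X) 1 j = 0 := by
  simp [mF, Matrix.mul_apply, Fin.sum_univ_four]
theorem mF_l2 (c : ℂ) (X : M4) (j : Fin 4) : (mF c * X) 2 j = X 0 j + c * X 3 j := by
  simp [mF, Matrix.mul_apply, Fin.sum_univ_four]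
theorem mF_l3 (c : ℂ) (X : M4) (j : Fin 4) : (mF c * X) 3 j = X 1 j := by
  simp [mF, Matrix.mul_apply, Fin.sum_univ_four]
theorem mF_r0 (c : ℂ) (X : M4) (j : Fin 4) : (X * Matrix.transpose (mF c)) j 0 = -(c * X j 1) := by
  simp [mF, Matrix.mul_apply, Fin.sum_univ_four, mul_comm]
theorem mF_r1 (c : ℂ) (X : M4) (j : Fin 4) : (X * Matrix.transpose (mF c)) j 1 = 0 := by
  simp [mF, Matrix.mul_apply, Fin.sum_univ_four, mul_comm]
theorem mF_r2 (c : ℂ) (X : M4) (j : Fin 4) : (X * Matrix.transpose (mF c)) j 2 = X j 0 + c * X j 3 := by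
  simp [mF, Matrix.mul_apply, Fin.sum_univ_four, mul_comm]
theorem mF_r3 (c : ℂ) (X : M4) (j : Fin 4) : (X * Matrix.transpose (mF c)) j 3 = X j 1 := by
  simp [mF, Matrix.mul_apply, Fin.sum_univ_four, mul_comm]
theorem E00_ent : E00 0 0 = 1 ∧ E00 0 1 = 0 ∧ E00 0 2 = 0 ∧ E00 0 3 = 0 ∧ E00 1 0 = 0 ∧ E00 1 1 = 0 ∧ E00 1 2 = 0 ∧ E00 1 3 = 0 ∧ E00 2 0 = 0 ∧ E00 2 1 = 0 ∧ E00 2 2 = 0 ∧ E00 2 3 = 0 ∧ E00 3 0 = 0 ∧ E00 3 1 = 0 ∧ E00 3 2 = 0 ∧ E00 3 3 = 0 := by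
  simp [E00]

theorem ent00 (β : ℂ) (ha2 : a ^ 2 = 1) (hb2 : b ^ 2 = 1) :
    ent a b ha hb (Mmat β) = 4 * a * b := by
  have hI : Complex.I ^ 2 = -1 := Complex.I_sq
  have ca : (2 * Complex.I)⁻¹ * (a - a ^ 3) = 0 := by
    rw [show a - a ^ 3 = a * (1 - a ^ 2) by ring, ha2, mul_inv, Complex.inv_I]; ring
  have cb : (2 * Complex.I)⁻¹ * (b - b ^ 3) = 0 := by
    rw [show b - b ^ 3 = b * (1 - b ^ 2) by ring, hb2, mul_inv, Complex.inv_I]; ring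
  have hz := E00_ent
  rw [ent_M, Phi2_R, Phi2_Rf, ha2, hb2]
  norm_num only [zero_smul, one_smul, add_zero, zero_add]
  simp only [R00, eEF, eEK, eFK, eEFK, flip_mul, flip_t2, map_add, map_sub, map_smul,
    map_mul, map_one, LinearMap.add_apply, LinearMap.sub_apply, LinearMap.smul_apply,
    Module.End.mul_apply, Phi2_t2, rho_E, rho_F, rho_K, Matrix.one_mul, Matrix.mul_one,
    Matrix.transpose_one, Matrix.transpose_mul, ca, cb, Matrix.mul_assoc, Matrix.mul_zero]
  simp only [← Matrix.mul_assoc, Matrix.add_apply, Matrix.sub_apply, Matrix.smul_apply, smul_eq_mul,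
    mK_r0, mK_r1, mK_r2, mK_r3, mE_r0, mE_r1, mE_r2, mE_r3, mF_r0, mF_r1, mF_r2, mF_r3,
    hz, mul_zero, add_zero, zero_add, sub_zero, neg_zero, zero_mul, mul_one, zero_sub]
  simp only [Matrix.mul_assoc,
    mK_l0, mK_l1, mK_l2, mK_l3, mE_l0, mE_l1, mE_l2, mE_l3, mF_l0, mF_l1, mF_l2, mF_l3,
    hz, mul_zero, add_zero, zero_add, sub_zero, neg_zero, zero_mul, mul_one, zero_sub]
  clear hz ca cb
  grind
theorem ent01 (β : ℂ) (ha2 : a ^ 2 = 1) (hb2 : b ^ 2 = -1) :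
    ent a b ha hb (Mmat β) = 4 * b := by
  have hI : Complex.I ^ 2 = -1 := Complex.I_sq
  have ca : (2 * Complex.I)⁻¹ * (a - a ^ 3) = 0 := by
    rw [show a - a ^ 3 = a * (1 - a ^ 2) by ring, ha2, mul_inv, Complex.inv_I]; ring
  have cb : (2 * Complex.I)⁻¹ * (b - b ^ 3) = -Complex.I * b := by
    rw [show b - b ^ 3 = b * (1 - b ^ 2) by ring, hb2, mul_inv, Complex.inv_I]; ring
  have hz := E00_ent
  rw [ent_M, Phi2_R, Phi2_Rf, ha2, hb2]
  norm_num only [zero_smul, one_smul, add_zero, zero_add]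
  simp only [R01, R10, eEF, eEK, eFK, eEFK, flip_mul, flip_t2, map_add, map_sub, map_smul,
    map_mul, map_one, LinearMap.add_apply, LinearMap.sub_apply, LinearMap.smul_apply,
    Module.End.mul_apply, Phi2_t2, rho_E, rho_F, rho_K, Matrix.one_mul, Matrix.mul_one,
    Matrix.transpose_one, Matrix.transpose_mul, ca, cb, Matrix.mul_assoc, Matrix.mul_zero]
  simp only [← Matrix.mul_assoc, Matrix.add_apply, Matrix.sub_apply, Matrix.smul_apply, smul_eq_mul,
    mK_r0, mK_r1, mK_r2, mK_r3, mE_r0, mE_r1, mE_r2, mE_r3, mF_r0, mF_r1, mF_r2, mF_r3,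
    hz, mul_zero, add_zero, zero_add, sub_zero, neg_zero, zero_mul, mul_one, zero_sub]
  simp only [Matrix.mul_assoc,
    mK_l0, mK_l1, mK_l2, mK_l3, mE_l0, mE_l1, mE_l2, mE_l3, mF_l0, mF_l1, mF_l2, mF_l3,
    hz, mul_zero, add_zero, zero_add, sub_zero, neg_zero, zero_mul, mul_one, zero_sub]
  clear hz ca cb
  grind
theorem ent10 (β : ℂ) (ha2 : a ^ 2 = -1) (hb2 : b ^ 2 = 1) :
    ent a b ha hb (Mmat β) = -4 * a := by
  have hI : Complex.I ^ 2 = -1 := Complex.I_sq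
  have ca : (2 * Complex.I)⁻¹ * (a - a ^ 3) = -Complex.I * a := by
    rw [show a - a ^ 3 = a * (1 - a ^ 2) by ring, ha2, mul_inv, Complex.inv_I]; ring
  have cb : (2 * Complex.I)⁻¹ * (b - b ^ 3) = 0 := by
    rw [show b - b ^ 3 = b * (1 - b ^ 2) by ring, hb2, mul_inv, Complex.inv_I]; ring
  have hz := E00_ent
  rw [ent_M, Phi2_R, Phi2_Rf, ha2, hb2]
  norm_num only [zero_smul, one_smul, add_zero, zero_add]
  simp only [R01, R10, eEF, eEK, eFK, eEFK, flip_mul, flip_t2, map_add, map_sub, map_smul,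
    map_mul, map_one, LinearMap.add_apply, LinearMap.sub_apply, LinearMap.smul_apply,
    Module.End.mul_apply, Phi2_t2, rho_E, rho_F, rho_K, Matrix.one_mul, Matrix.mul_one,
    Matrix.transpose_one, Matrix.transpose_mul, ca, cb, Matrix.mul_assoc, Matrix.mul_zero]
  simp only [← Matrix.mul_assoc, Matrix.add_apply, Matrix.sub_apply, Matrix.smul_apply, smul_eq_mul,
    mK_r0, mK_r1, mK_r2, mK_r3, mE_r0, mE_r1, mE_r2, mE_r3, mF_r0, mF_r1, mF_r2, mF_r3,
    hz, mul_zero, add_zero, zero_add, sub_zero, neg_zero, zero_mul, mul_one, zero_sub]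
  simp only [Matrix.mul_assoc,
    mK_l0, mK_l1, mK_l2, mK_l3, mE_l0, mE_l1, mE_l2, mE_l3, mF_l0, mF_l1, mF_l2, mF_l3,
    hz, mul_zero, add_zero, zero_add, sub_zero, neg_zero, zero_mul, mul_one, zero_sub]
  clear hz ca cb
  grind
theorem ent11 (β : ℂ) (ha2 : a ^ 2 = -1) (hb2 : b ^ 2 = -1) :
    ent a b ha hb (Mmat β) = 4 * β ^ 2 := by
  have hI : Complex.I ^ 2 = -1 := Complex.I_sq
  have ca : (2 * Complex.I)⁻¹ * (a - a ^ 3) = -Complex.I * a := by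
    rw [show a - a ^ 3 = a * (1 - a ^ 2) by ring, ha2, mul_inv, Complex.inv_I]; ring
  have cb : (2 * Complex.I)⁻¹ * (b - b ^ 3) = -Complex.I * b := by
    rw [show b - b ^ 3 = b * (1 - b ^ 2) by ring, hb2, mul_inv, Complex.inv_I]; ring
  have hz := E00_ent
  rw [ent_M, Phi2_R, Phi2_Rf, ha2, hb2]
  norm_num only [zero_smul, one_smul, add_zero, zero_add]
  simp only [R11, eEF, eEK, eFK, eEFK, flip_mul, flip_t2, map_add, map_sub, map_smul,
    map_mul, map_one, LinearMap.add_apply, LinearMap.sub_apply, LinearMap.smul_apply,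
    Module.End.mul_apply, Phi2_t2, rho_E, rho_F, rho_K, Matrix.one_mul, Matrix.mul_one,
    Matrix.transpose_one, Matrix.transpose_mul, ca, cb, Matrix.mul_assoc, Matrix.mul_zero]
  simp only [← Matrix.mul_assoc, Matrix.add_apply, Matrix.sub_apply, Matrix.smul_apply, smul_eq_mul,
    mK_r0, mK_r1, mK_r2, mK_r3, mE_r0, mE_r1, mE_r2, mE_r3, mF_r0, mF_r1, mF_r2, mF_r3,
    hz, mul_zero, add_zero, zero_add, sub_zero, neg_zero, zero_mul, mul_one, zero_sub]
  simp only [Matrix.mul_assoc,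
    mK_l0, mK_l1, mK_l2, mK_l3, mE_l0, mE_l1, mE_l2, mE_l3, mF_l0, mF_l1, mF_l2, mF_l3,
    hz, mul_zero, add_zero, zero_add, sub_zero, neg_zero, zero_mul, mul_one, zero_sub]
  clear hz ca cb
  grind
end


theorem mono (β : ℂ) (hβ : β ^ 4 = -1) :
    TensorProduct.lid ℂ ℂ (TensorProduct.map (mu0 (β ^ 2 / Complex.I)) (mu0 (β ^ 2 / Complex.I))
      (Mmat β)) = 1 := by
  have hI : Complex.I ^ 2 = -1 := Complex.I_sq
  have q1 : (1 : ℂ) ^ 2 = 1 := by norm_num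
  have q2 : (-1 : ℂ) ^ 2 = 1 := by norm_num
  have q4 : (-Complex.I) ^ 2 = -1 := by rw [neg_sq, hI]
  simp only [mu0, TensorProduct.map_add_left, TensorProduct.map_add_right,
    TensorProduct.map_smul_left, TensorProduct.map_smul_right, LinearMap.add_apply,
    LinearMap.smul_apply, map_add, map_smul, smul_eq_mul, smul_add, map_coef _ _ p1 p1,
    map_coef _ _ p1 p2, map_coef _ _ p1 p3, map_coef _ _ p1 p4, map_coef _ _ p2 p1,
    map_coef _ _ p2 p2, map_coef _ _ p2 p3, map_coef _ _ p2 p4, map_coef _ _ p3 p1,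
    map_coef _ _ p3 p2, map_coef _ _ p3 p3, map_coef _ _ p3 p4, map_coef _ _ p4 p1,
    map_coef _ _ p4 p2, map_coef _ _ p4 p3, map_coef _ _ p4 p4]
  rw [ent00 _ _ _ _ _ q1 q1, ent00 _ _ _ _ _ q1 q2, ent00 _ _ _ _ _ q2 q1, ent00 _ _ _ _ _ q2 q2,
    ent01 _ _ _ _ _ q1 hI, ent01 _ _ _ _ _ q1 q4, ent01 _ _ _ _ _ q2 hI, ent01 _ _ _ _ _ q2 q4,
    ent10 _ _ _ _ _ hI q1, ent10 _ _ _ _ _ hI q2, ent10 _ _ _ _ _ q4 q1, ent10 _ _ _ _ _ q4 q2,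
    ent11 _ _ _ _ _ hI hI, ent11 _ _ _ _ _ hI q4, ent11 _ _ _ _ _ q4 hI, ent11 _ _ _ _ _ q4 q4,
    div_eq_mul_inv (β ^ 2), Complex.inv_I]
  grind

end Helpers

/-- the functional `μ` with `μ(E^m F^n K^l) = (β²/i)·δ_{m,1}δ_{n,1}δ_{l,3}`
is a right integral, `c = (β²/i)·EF(1+K+K²+K³)` is a two-sided cointegral, and the
normalisations `(μ⊗μ)(M) = 1` and `μ(c) = 1` hold. -/
theorem statement16 (β : ℂ) (hβ : β ^ 4 = -1)
    (Δ : Q →ₐ[ℂ] TP2 ℂ Q)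
    (hΔE : Δ gE = (1:Q) ⊗ₜ[ℂ] gE + gE ⊗ₜ[ℂ] gK)
    (hΔF : Δ gF = gKi ⊗ₜ[ℂ] gF + gF ⊗ₜ[ℂ] (1:Q))
    (hΔK : Δ gK = gK ⊗ₜ[ℂ] gK)
    (ce : Q →ₐ[ℂ] ℂ) (hceE : ce gE = 0) (hceF : ce gF = 0) (hceK : ce gK = 1) :
    (∃ μ : Q →ₗ[ℂ] ℂ, ∀ (m n : Fin 2) (l : Fin 4),
      μ (gE ^ (m : ℕ) * gF ^ (n : ℕ) * gK ^ (l : ℕ)) =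
        if m = 1 ∧ n = 1 ∧ l = 3 then β ^ 2 / Complex.I else 0) ∧
    ∀ μ : Q →ₗ[ℂ] ℂ,
      (∀ (m n : Fin 2) (l : Fin 4),
        μ (gE ^ (m : ℕ) * gF ^ (n : ℕ) * gK ^ (l : ℕ)) =
          if m = 1 ∧ n = 1 ∧ l = 3 then β ^ 2 / Complex.I else 0) →
      (∀ x : Q, (TensorProduct.lid ℂ Q) (TensorProduct.map μ LinearMap.id (Δ x)) = μ x • 1) ∧
      (∀ x : Q, x * cInt β = ce x • cInt β ∧ cInt β * x = ce x • cInt β) ∧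
      (TensorProduct.lid ℂ ℂ) (TensorProduct.map μ μ (Mmat β)) = 1 ∧
      μ (cInt β) = 1 := by
  refine ⟨⟨mu0 _, mu0_fin _⟩, fun μ h => ?_⟩
  have hv := mu_vals _ μ h
  refine ⟨right_int _ μ hv Δ hΔE hΔF hΔK, coint β ce hceE hceF hceK, ?_, mu_cInt β hβ μ hv⟩
  rw [mu_eq _ μ hv]
  exact mono β hβ
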